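/- arXiv:1709.02079 — 6 statements merged into one kernel-verified Lean document; each statement's English description precedes it below -/
import Mathlib

section
/- Let T, T' ⊆ E, and for each (a,b) ∈ T let q_{a,b} ∈ ℤ/qℤ be nonzero and for each (a,b) ∈ T' let q'_{a,b} ∈ ℤ/qℤ be nonzero. If Σ_{(a,b)∈T} q_{a,b}·λ_{a,b} = Σ_{(a,b)∈T'} q'_{a,b}·λ_{a,b} in R'_q, then T = T' and q_{a,b} = q'_{a,b} for every (a,b) ∈ T. -/
noncomputable section

open MvPolynomial Quaternion

/-- The ring `R'_q = (ℤ/qℤ)[x,y]/⟨x^n - 1, y^n - 1⟩`. -/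
abbrev Rq (q n : ℕ) : Type :=
  MvPolynomial (Fin 2) (ZMod q) ⧸
    (Ideal.span {(X 0 : MvPolynomial (Fin 2) (ZMod q)) ^ n - 1, (X 1 : MvPolynomial (Fin 2) (ZMod q)) ^ n - 1})

/-- Evaluation `ev_{a,b} : R'_q → ℤ/qℤ` at a point `(a,b)` with `a^n = b^n = 1`. -/
def ev (q n : ℕ) (a b : ZMod q) (ha : a ^ n = 1) (hb : b ^ n = 1) :
    Rq q n →+* ZMod q :=
  Ideal.Quotient.lift _ (MvPolynomial.eval ![a, b])
    (by
      intro f hf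
      rw [← RingHom.mem_ker]
      refine Ideal.span_le.mpr ?_ hf
      rintro p hp
      rcases hp with rfl | rfl <;>
        simp [RingHom.mem_ker, ha, hb])

/-- The Lagrange interpolant `λ_{a,b} ∈ R'_q`. -/
def lag (q n : ℕ) (a b : ZMod q) : Rq q n :=
  Ideal.Quotient.mk _ (MvPolynomial.C (((n : ZMod q) ^ 2)⁻¹) *
    ∑ i ∈ Finset.range n, ∑ j ∈ Finset.range n,
      MvPolynomial.C (a⁻¹ ^ i * b⁻¹ ^ j) * (X 0 ^ i * X 1 ^ j))

/-- The set `E` of points `(a,b)` with `a^n = b^n = 1`, as a finset. -/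
def Efin (q n : ℕ) [NeZero q] : Finset (ZMod q × ZMod q) :=
  Finset.univ.filter fun p => p.1 ^ n = 1 ∧ p.2 ^ n = 1

/-- Evaluation at an arbitrary point of `(ℤ/qℤ)²` (zero outside `E`). -/
def evAt (q n : ℕ) (p : ZMod q × ZMod q) (f : Rq q n) : ZMod q :=
  if h : p.1 ^ n = 1 ∧ p.2 ^ n = 1 then ev q n p.1 p.2 h.1 h.2 f else 0

/-- Componentwise evaluation of a quaternion of `𝔸_q` at a point of `E`. -/
def qevAt (q n : ℕ) (p : ZMod q × ZMod q) (F : ℍ[Rq q n, 1, 1]) : ℍ[ZMod q, 1, 1] :=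
  ⟨evAt q n p F.re, evAt q n p F.imI, evAt q n p F.imJ, evAt q n p F.imK⟩

/-- The central (scalar) quaternion attached to `s ∈ R'_q`. -/
def cen (q n : ℕ) (s : Rq q n) : ℍ[Rq q n, 1, 1] :=
  algebraMap (Rq q n) ℍ[Rq q n, 1, 1] s

/-- A quaternion over `ℤ/qℤ` regarded as a constant quaternion of `𝔸_q`. -/
def constQ (q n : ℕ) (w : ℍ[ZMod q, 1, 1]) : ℍ[Rq q n, 1, 1] :=
  ⟨Ideal.Quotient.mk _ (MvPolynomial.C w.re), Ideal.Quotient.mk _ (MvPolynomial.C w.imI),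
   Ideal.Quotient.mk _ (MvPolynomial.C w.imJ), Ideal.Quotient.mk _ (MvPolynomial.C w.imK)⟩

/-- The Hamming weight of `ρ(F)`: the number of nonzero components, over all points of `E`,
among the four quaternion components of the evaluation of `F`. -/
def hw (q n : ℕ) [NeZero q] (F : ℍ[Rq q n, 1, 1]) : ℕ :=
  ∑ p ∈ Efin q n,
    ((if (qevAt q n p F).re ≠ 0 then 1 else 0) +
     (if (qevAt q n p F).imI ≠ 0 then 1 else 0) +
     (if (qevAt q n p F).imJ ≠ 0 then 1 else 0) +
     (if (qevAt q n p F).imK ≠ 0 then 1 else 0))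

/-!
Evaluation at a point `(x, y)` with `x ^ n = y ^ n = 1` is a linear form on the ring, and its value
on `λ_{a,b}` is a product of two normalised geometric sums with ratios `a⁻¹ * x` and `b⁻¹ * y`.
These ratios are `n`-th roots of unity, so for `(a, b)` in `E` the product is `1` if
`(a, b) = (x, y)` and `0` otherwise. Having a dual family of linear forms, the `λ_{a,b}` are
linearly independent.
-/

theorem sum_range_pow_of_pow_eq_one {R : Type*} [Ring R] [NoZeroDivisors R] [DecidableEq R]
    {n : ℕ} {z : R} (hz : z ^ n = 1) :
    ∑ i ∈ Finset.range n, z ^ i = if z = 1 then (n : R) else 0 := by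
  split_ifs with h
  · simp [h]
  · have hmul : (∑ i ∈ Finset.range n, z ^ i) * (z - 1) = 0 := by rw [geom_sum_mul, hz, sub_self]
    exact (mul_eq_zero.mp hmul).resolve_right (sub_ne_zero.mpr h)

theorem inv_natCast_mul_sum_range_inv_mul_pow {K : Type*} [Field K] [DecidableEq K] {n : ℕ}
    (hn : (n : K) ≠ 0) {a x : K} (ha : a ^ n = 1) (hx : x ^ n = 1) :
    (n : K)⁻¹ * ∑ i ∈ Finset.range n, (a⁻¹ * x) ^ i = if a = x then 1 else 0 := by
  have hn0 : n ≠ 0 := fun h => hn (by rw [h, Nat.cast_zero])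
  have ha0 : a ≠ 0 := ne_zero_pow hn0 (ha ▸ one_ne_zero)
  have hz : (a⁻¹ * x) ^ n = 1 := by rw [mul_pow, inv_pow, ha, hx, inv_one, one_mul]
  rw [sum_range_pow_of_pow_eq_one hz, mul_ite, inv_mul_cancel₀ hn, mul_zero]
  simp only [inv_mul_eq_one₀ ha0]

theorem finset_eq_and_eqOn_of_sum_smul_eq {ι R M : Type*} [Semiring R] [AddCommMonoid M]
    [Module R M] {v : ι → M} {s : Set ι} (hv : LinearIndepOn R v s) {T T' : Finset ι}
    (hT : ↑T ⊆ s) (hT' : ↑T' ⊆ s) {c c' : ι → R} (hc : ∀ i ∈ T, c i ≠ 0) (hc' : ∀ i ∈ T', c' i ≠ 0)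
    (h : ∑ i ∈ T, c i • v i = ∑ i ∈ T', c' i • v i) :
    T = T' ∧ ∀ i ∈ T, c i = c' i := by
  classical
  have hunion : LinearIndepOn R v ↑(T ∪ T') :=
    hv.mono (by simpa only [Finset.coe_union] using Set.union_subset hT hT')
  have hsum : ∑ i ∈ T ∪ T', (if i ∈ T then c i else 0) • v i =
      ∑ i ∈ T ∪ T', (if i ∈ T' then c' i else 0) • v i := by
    simpa only [ite_smul, zero_smul, Finset.sum_ite_mem, Finset.union_inter_cancel_left,
      Finset.union_inter_cancel_right] using h
  have hcoeff := linearIndepOn_finset_iffₛ.mp hunion _ _ hsum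
  have hTT' : T = T' := Finset.ext fun i => by grind
  exact ⟨hTT', by grind⟩

/-- The ring `R[x,y]/⟨x^n - 1, y^n - 1⟩` over arbitrary coefficients; `Rq q n` is the case
`R = ZMod q`. -/
abbrev BicyclicRing (R : Type*) [CommRing R] (n : ℕ) : Type _ :=
  MvPolynomial (Fin 2) R ⧸
    (Ideal.span {(X 0 : MvPolynomial (Fin 2) R) ^ n - 1, (X 1 : MvPolynomial (Fin 2) R) ^ n - 1})

/-- The set `E` of pairs of `n`-th roots of unity, the points at which elements of
`BicyclicRing R n` can be evaluated. -/
def rootPairs (R : Type*) [Monoid R] (n : ℕ) : Set (R × R) :=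
  {p | p.1 ^ n = 1 ∧ p.2 ^ n = 1}

namespace BicyclicRing

/-- Evaluation at a point of `E`, as an algebra homomorphism so that it provides linear forms. -/
def evalAt {R : Type*} [CommRing R] {n : ℕ} (p : rootPairs R n) : BicyclicRing R n →ₐ[R] R :=
  Ideal.Quotient.liftₐ _ (MvPolynomial.aeval ![p.1.1, p.1.2]) fun f hf => by
    rw [← RingHom.mem_ker]
    refine Ideal.span_le.mpr ?_ hf
    rintro _ (rfl | rfl) <;> simp [RingHom.mem_ker, p.2.1, p.2.2]

variable {K : Type*} [Field K]

/-- The Lagrange interpolant `λ_{a,b}` over an arbitrary field, for `p = (a, b)`; it unfolds to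
`lag q n a b` when `K = ZMod q`. -/
def lagrange (n : ℕ) (p : K × K) : BicyclicRing K n :=
  Ideal.Quotient.mk _ (C (((n : K) ^ 2)⁻¹) *
    ∑ i ∈ Finset.range n, ∑ j ∈ Finset.range n, C (p.1⁻¹ ^ i * p.2⁻¹ ^ j) * (X 0 ^ i * X 1 ^ j))

variable {n : ℕ}

theorem evalAt_lagrange_eq_mul (p : rootPairs K n) (r : K × K) :
    evalAt p (lagrange n r) =
      ((n : K)⁻¹ * ∑ i ∈ Finset.range n, (r.1⁻¹ * p.1.1) ^ i) *
        ((n : K)⁻¹ * ∑ j ∈ Finset.range n, (r.2⁻¹ * p.1.2) ^ j) := by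
  have heval : evalAt p (lagrange n r) = ((n : K) ^ 2)⁻¹ * ∑ i ∈ Finset.range n,
      ∑ j ∈ Finset.range n, r.1⁻¹ ^ i * r.2⁻¹ ^ j * (p.1.1 ^ i * p.1.2 ^ j) := by
    simp [evalAt, lagrange]
  rw [heval, mul_mul_mul_comm, ← mul_inv, ← sq, Finset.sum_mul_sum]
  simp only [mul_pow, mul_mul_mul_comm]

theorem evalAt_lagrange [DecidableEq K] (hn : (n : K) ≠ 0) (p r : rootPairs K n) :
    evalAt p (lagrange n r) = if r = p then 1 else 0 := by
  rw [evalAt_lagrange_eq_mul, inv_natCast_mul_sum_range_inv_mul_pow hn r.2.1 p.2.1,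
    inv_natCast_mul_sum_range_inv_mul_pow hn r.2.2 p.2.2, mul_ite_zero, mul_one, ← ite_and]
  simp only [Subtype.ext_iff, Prod.ext_iff, and_comm]

theorem linearIndepOn_lagrange (hn : (n : K) ≠ 0) :
    LinearIndepOn K (lagrange n) (rootPairs K n) := by
  classical
  refine LinearIndependent.of_pairwise_dual_eq_zero_one _ (fun p => (evalAt p).toLinearMap)
    (fun p r hpr => ?_) fun p => ?_
  · exact (evalAt_lagrange hn p r).trans (if_neg hpr.symm)
  · exact (evalAt_lagrange hn p p).trans (if_pos rfl)

end BicyclicRing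

theorem natCast_ne_zero_of_dvd_sub_one {q n : ℕ} (hq : 1 < q) (hn : n ∣ q - 1) :
    (n : ZMod q) ≠ 0 := fun h =>
  have hdvd : q ∣ q - 1 := ((ZMod.natCast_eq_zero_iff n q).mp h).trans hn
  Nat.not_dvd_of_pos_of_lt (Nat.sub_pos_of_lt hq) (Nat.sub_one_lt_of_lt hq) hdvd

theorem coe_efin (q n : ℕ) [NeZero q] :
    (Efin q n : Set (ZMod q × ZMod q)) = rootPairs (ZMod q) n := by
  ext p
  simp [Efin, rootPairs]

theorem stmt3_general {K : Type*} [Field K] {n : ℕ} (hn : (n : K) ≠ 0) {T T' : Finset (K × K)}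
    (hT : ↑T ⊆ rootPairs K n) (hT' : ↑T' ⊆ rootPairs K n) {c c' : K × K → K}
    (hc : ∀ p ∈ T, c p ≠ 0) (hc' : ∀ p ∈ T', c' p ≠ 0)
    (h : ∑ p ∈ T, c p • BicyclicRing.lagrange n p = ∑ p ∈ T', c' p • BicyclicRing.lagrange n p) :
    T = T' ∧ ∀ p ∈ T, c p = c' p :=
  finset_eq_and_eqOn_of_sum_smul_eq (BicyclicRing.linearIndepOn_lagrange hn) hT hT' hc hc' h

/-- Uniqueness of the representation of an element of `R'_q` as a combination
`Σ_{(a,b)∈T} q_{a,b}·λ_{a,b}` with nonzero coefficients: if two such combinations (over subsets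
`T, T'` of `E`) coincide, then `T = T'` and the coefficients agree on `T`. -/
theorem stmt3 (q n : ℕ) [Fact q.Prime] (hn : n ∣ q - 1) (hnpos : 0 < n)
    (T T' : Finset (ZMod q × ZMod q)) (hT : T ⊆ Efin q n) (hT' : T' ⊆ Efin q n)
    (c c' : ZMod q × ZMod q → ZMod q)
    (hc : ∀ p ∈ T, c p ≠ 0) (hc' : ∀ p ∈ T', c' p ≠ 0)
    (h : ∑ p ∈ T, c p • lag q n p.1 p.2 = ∑ p ∈ T', c' p • lag q n p.1 p.2) :
    T = T' ∧ ∀ p ∈ T, c p = c' p := by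
  have hn0 := natCast_ne_zero_of_dvd_sub_one (Fact.out : q.Prime).one_lt hn
  exact stmt3_general hn0 ((Finset.coe_subset.mpr hT).trans_eq (coe_efin q n))
    ((Finset.coe_subset.mpr hT').trans_eq (coe_efin q n)) hc hc' h
end
end

section
/- With the setup of the context, let τ' ∈ 𝔸_q satisfy τ' ≠ ϑ and suppose there exist F', α' ∈ 𝔸_q with F∘F' = F'∘F = 1 + α'∘τ' and H̃ = F'∘G + τ'. Then the Hamming weight ‖ρ(τ')‖_H is strictly greater than 4·|T|. -/
noncomputable section

open MvPolynomial Quaternion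

/-!
The two expressions for `H̃` show that `τ' - ϑ` is a left multiple of `G`, so `τ'` and `ϑ` agree
on `T`, where all four components of `ϑ = W∘σ` are nonzero: this accounts for `4·|T|`. Since
`ℤ/qℤ` contains a primitive `n`-th root of unity, the combinatorial Nullstellensatz shows that `ρ`
is injective, so `τ' ≠ ϑ` forces a difference at some point of `E \ T`, where `ϑ` vanishes and `τ'`
therefore has at least one further nonzero component.
-/

section RootsOfUnity

theorem pos_of_dvd_prime_sub_one {q n : ℕ} (hq : q.Prime) (hn : n ∣ q - 1) : 0 < n :=
  Nat.pos_of_dvd_of_pos hn (Nat.sub_pos_of_lt hq.one_lt)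

theorem zmod_exists_isPrimitiveRoot_of_dvd {q n : ℕ} [Fact q.Prime] (hn : n ∣ q - 1) :
    ∃ ζ : ZMod q, IsPrimitiveRoot ζ n := by
  have : NeZero (q - 1) := ⟨(pos_of_dvd_prime_sub_one Fact.out dvd_rfl).ne'⟩
  have := HasEnoughRootsOfUnity.of_dvd (ZMod q) hn
  exact HasEnoughRootsOfUnity.exists_primitiveRoot (ZMod q) n

theorem zmod_natCast_ne_zero_of_dvd_sub_one {q n : ℕ} [Fact q.Prime] (hn : n ∣ q - 1) :
    (n : ZMod q) ≠ 0 := by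
  have : NeZero n := ⟨(pos_of_dvd_prime_sub_one Fact.out hn).ne'⟩
  obtain ⟨ζ, hζ⟩ := zmod_exists_isPrimitiveRoot_of_dvd hn
  exact hζ.neZero'.out

variable {R : Type*} [CommRing R] [IsDomain R] {n : ℕ} {ζ : R} {ι : Type*}

theorem prod_nthRootsFinset_X_sub_C (hn : 0 < n) (hζ : IsPrimitiveRoot ζ n) (i : ι) :
    ∏ r ∈ Polynomial.nthRootsFinset n (1 : R), ((X i : MvPolynomial ι R) - C r) =
      X i ^ n - 1 := by
  have := congrArg (Polynomial.aeval (X i : MvPolynomial ι R))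
    (Polynomial.X_pow_sub_one_eq_prod hn hζ)
  simpa [map_prod, algebraMap_eq] using this.symm

theorem mem_span_X_pow_sub_one_of_forall_eval_eq_zero [Finite ι] (hn : 0 < n)
    (hζ : IsPrimitiveRoot ζ n) {P : MvPolynomial ι R}
    (hP : ∀ x : ι → R, (∀ i, x i ^ n = 1) → eval x P = 0) :
    P ∈ Ideal.span (Set.range fun i : ι => (X i : MvPolynomial ι R) ^ n - 1) := by
  obtain ⟨h, -, hPh⟩ := combinatorial_nullstellensatz_exists_linearCombination
    (fun _ : ι => Polynomial.nthRootsFinset n (1 : R))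
    (fun _ => ⟨1, by simp [Polynomial.mem_nthRootsFinset hn]⟩) P
    (fun x hx => hP x fun i => (Polynomial.mem_nthRootsFinset hn 1).1 (hx i))
  simp_rw [prod_nthRootsFinset_X_sub_C hn hζ] at hPh
  exact Finsupp.mem_span_range_iff_exists_finsupp.2 ⟨h, hPh.symm⟩

theorem sum_inv_pow_mul_pow_eq_ite {K : Type*} [Field K] [DecidableEq K] {a b : K}
    (ha : a ^ n = 1) (hb : b ^ n = 1) :
    ∑ i ∈ Finset.range n, a⁻¹ ^ i * b ^ i = if b = a then (n : K) else 0 := by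
  obtain rfl | hn := eq_or_ne n 0
  · simp
  have ha0 : a ≠ 0 := by
    rintro rfl
    simp [hn] at ha
  simp_rw [← mul_pow]
  split_ifs with h
  · simp [h, ha0]
  · have hne : a⁻¹ * b ≠ 1 := fun h1 => h ((inv_mul_eq_one₀ ha0).1 h1).symm
    rw [geom_sum_eq hne, mul_pow, inv_pow, ha, hb]
    simp

end RootsOfUnity

section QuatWeight

variable {R : Type*} [Zero R] [DecidableEq R] {a b : R}

/-- The Hamming weight of a quaternion: its number of nonzero components. -/
def quatWeight (x : ℍ[R,a,b]) : ℕ :=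
  (if x.re ≠ 0 then 1 else 0) + (if x.imI ≠ 0 then 1 else 0) +
    (if x.imJ ≠ 0 then 1 else 0) + (if x.imK ≠ 0 then 1 else 0)

theorem quatWeight_pos_iff {x : ℍ[R,a,b]} : 0 < quatWeight x ↔ x ≠ 0 := by
  simp only [quatWeight, ne_eq, QuaternionAlgebra.ext_iff]
  split_ifs <;> simp_all

theorem quatWeight_eq_four_iff {x : ℍ[R,a,b]} :
    quatWeight x = 4 ↔ x.re ≠ 0 ∧ x.imI ≠ 0 ∧ x.imJ ≠ 0 ∧ x.imK ≠ 0 := by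
  simp only [quatWeight]
  split_ifs <;> simp_all

end QuatWeight

section Evaluation

variable {q n : ℕ}

theorem evAt_mk {p : ZMod q × ZMod q} (hp : p.1 ^ n = 1 ∧ p.2 ^ n = 1)
    (P : MvPolynomial (Fin 2) (ZMod q)) :
    evAt q n p (Ideal.Quotient.mk _ P) = eval ![p.1, p.2] P := by
  rw [evAt, dif_pos hp, ev, Ideal.Quotient.lift_mk]

/-- The map `evAt` as a homomorphism of algebras, non-unital because `evAt` is zero outside `E`. -/
def evAtHom (q n : ℕ) (p : ZMod q × ZMod q) : Rq q n →ₙₐ[ZMod q] ZMod q where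
  toFun := evAt q n p
  map_smul' c f := by
    obtain ⟨P, rfl⟩ := Ideal.Quotient.mk_surjective f
    by_cases hp : p.1 ^ n = 1 ∧ p.2 ^ n = 1
    · have hmk : c • Ideal.Quotient.mk _ P = (Ideal.Quotient.mk _ (c • P) : Rq q n) := rfl
      rw [hmk, evAt_mk hp, evAt_mk hp, smul_eval]
      rfl
    · simp [evAt, hp]
  map_zero' := by unfold evAt; split_ifs <;> simp
  map_add' f g := by unfold evAt; split_ifs <;> simp
  map_mul' f g := by unfold evAt; split_ifs <;> simp

theorem evAtHom_apply (p : ZMod q × ZMod q) (f : Rq q n) : evAtHom q n p f = evAt q n p f :=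
  rfl

/-- The map `qevAt` as a non-unital ring homomorphism, obtained from `evAtHom` componentwise. -/
def qevAtHom (q n : ℕ) (p : ZMod q × ZMod q) : ℍ[Rq q n,1,1] →ₙ+* ℍ[ZMod q,1,1] where
  toFun := qevAt q n p
  map_zero' := by ext <;> simp [qevAt, ← evAtHom_apply]
  map_add' A B := by ext <;> simp [qevAt, ← evAtHom_apply]
  map_mul' A B := by ext <;> simp [qevAt, ← evAtHom_apply]

theorem qevAtHom_apply (p : ZMod q × ZMod q) (A : ℍ[Rq q n,1,1]) :
    qevAtHom q n p A = qevAt q n p A :=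
  rfl

theorem qevAt_mul_add_of_eq_zero {p : ZMod q × ZMod q} {G : ℍ[Rq q n,1,1]}
    (hG : qevAt q n p G = 0) (A B : ℍ[Rq q n,1,1]) :
    qevAt q n p (A * G + B) = qevAt q n p B := by
  simp only [← qevAtHom_apply] at hG ⊢
  rw [map_add, map_mul, hG, mul_zero, zero_add]

variable [NeZero q] {p : ZMod q × ZMod q}

theorem mem_Efin : p ∈ Efin q n ↔ p.1 ^ n = 1 ∧ p.2 ^ n = 1 := by
  simp [Efin]

theorem qevAt_constQ_mul_cen (hp : p ∈ Efin q n) (W : ℍ[ZMod q,1,1]) (s : Rq q n) :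
    qevAt q n p (constQ q n W * cen q n s) = evAt q n p s • W := by
  have hconst : qevAt q n p (constQ q n W) = W := by
    ext <;> simp [qevAt, constQ, evAt_mk (mem_Efin.1 hp)]
  have hcen : qevAt q n p (cen q n s) = algebraMap _ _ (evAt q n p s) := by
    ext <;> simp [qevAt, cen, QuaternionAlgebra.algebraMap_eq, ← evAtHom_apply]
  rw [← qevAtHom_apply, map_mul, qevAtHom_apply, qevAtHom_apply, hconst, hcen,
    ← Algebra.commutes, ← Algebra.smul_def]

theorem hw_eq_sum_quatWeight (A : ℍ[Rq q n,1,1]) :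
    hw q n A = ∑ p ∈ Efin q n, quatWeight (qevAt q n p A) :=
  rfl

end Evaluation

section Interpolation

variable {q n : ℕ} [Fact q.Prime]

theorem evAt_lag (hn : (n : ZMod q) ≠ 0) {p r : ZMod q × ZMod q} (hp : p ∈ Efin q n)
    (hr : r ∈ Efin q n) : evAt q n p (lag q n r.1 r.2) = if p = r then 1 else 0 := by
  obtain ⟨hr₁, hr₂⟩ := mem_Efin.1 hr
  obtain ⟨hp₁, hp₂⟩ := mem_Efin.1 hp
  have hsplit : ∑ i ∈ Finset.range n, ∑ j ∈ Finset.range n,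
      r.1⁻¹ ^ i * r.2⁻¹ ^ j * (p.1 ^ i * p.2 ^ j) =
      (∑ i ∈ Finset.range n, r.1⁻¹ ^ i * p.1 ^ i) *
        ∑ j ∈ Finset.range n, r.2⁻¹ ^ j * p.2 ^ j := by
    simp_rw [Finset.sum_mul_sum, mul_mul_mul_comm]
  rw [lag, evAt_mk ⟨hp₁, hp₂⟩]
  simp only [map_mul, map_sum, map_pow, eval_C, eval_X, Matrix.cons_val_zero, Matrix.cons_val_one]
  rw [hsplit, sum_inv_pow_mul_pow_eq_ite hr₁ hp₁, sum_inv_pow_mul_pow_eq_ite hr₂ hp₂,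
    ite_zero_mul_ite_zero, mul_ite, mul_zero, ← sq, inv_mul_cancel₀ (pow_ne_zero 2 hn)]
  simp only [Prod.ext_iff]

theorem evAt_sum_smul_lag (hn : (n : ZMod q) ≠ 0) {T : Finset (ZMod q × ZMod q)}
    (hT : T ⊆ Efin q n) (c : ZMod q × ZMod q → ZMod q) {p : ZMod q × ZMod q}
    (hp : p ∈ Efin q n) :
    evAt q n p (∑ r ∈ T, c r • lag q n r.1 r.2) = if p ∈ T then c p else 0 := by
  rw [← evAtHom_apply, map_sum, ← Finset.sum_ite_eq T p c]
  refine Finset.sum_congr rfl fun r hr => ?_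
  rw [map_smul, evAtHom_apply, evAt_lag hn hp (hT hr), smul_ite, smul_zero, smul_eq_mul, mul_one]

end Interpolation

section Injectivity

variable {q n : ℕ} [Fact q.Prime]

theorem eq_zero_of_forall_evAt_eq_zero (hn : n ∣ q - 1) {f : Rq q n}
    (hf : ∀ p ∈ Efin q n, evAt q n p f = 0) : f = 0 := by
  have hn0 := pos_of_dvd_prime_sub_one Fact.out hn
  obtain ⟨ζ, hζ⟩ := zmod_exists_isPrimitiveRoot_of_dvd hn
  obtain ⟨P, rfl⟩ := Ideal.Quotient.mk_surjective f
  have hP (x : Fin 2 → ZMod q) (hx : ∀ i, x i ^ n = 1) : eval x P = 0 := by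
    have hx01 : ![x 0, x 1] = x := by
      ext i
      fin_cases i <;> rfl
    have hE : (x 0, x 1) ∈ Efin q n := mem_Efin.2 ⟨hx 0, hx 1⟩
    rw [← hx01, ← evAt_mk (mem_Efin.1 hE), hf _ hE]
  have hmem := mem_span_X_pow_sub_one_of_forall_eval_eq_zero hn0 hζ hP
  rw [Ideal.Quotient.eq_zero_iff_mem]
  convert hmem using 2
  ext Q
  simp [Fin.exists_fin_two, eq_comm]

theorem eq_of_forall_qevAt_eq (hn : n ∣ q - 1) {A B : ℍ[Rq q n,1,1]}
    (h : ∀ p ∈ Efin q n, qevAt q n p A = qevAt q n p B) : A = B := by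
  have hzero (p) (hp : p ∈ Efin q n) : qevAt q n p (A - B) = 0 := by
    rw [← qevAtHom_apply, map_sub, qevAtHom_apply, qevAtHom_apply, h p hp, sub_self]
  rw [← sub_eq_zero]
  ext <;> refine eq_zero_of_forall_evAt_eq_zero hn fun p hp => ?_
  exacts [congrArg (·.re) (hzero p hp), congrArg (·.imI) (hzero p hp),
    congrArg (·.imJ) (hzero p hp), congrArg (·.imK) (hzero p hp)]

end Injectivity

theorem four_mul_card_lt_hw_of_qevAt_eq {q n : ℕ} [Fact q.Prime] (hn : n ∣ q - 1)
    {T : Finset (ZMod q × ZMod q)} (hT : T ⊆ Efin q n) {ϑ τ : ℍ[Rq q n,1,1]}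
    (hϑT : ∀ p ∈ T, quatWeight (qevAt q n p ϑ) = 4)
    (hϑ0 : ∀ p ∈ Efin q n, p ∉ T → qevAt q n p ϑ = 0)
    (hτT : ∀ p ∈ T, qevAt q n p τ = qevAt q n p ϑ) (hτ : τ ≠ ϑ) :
    4 * T.card < hw q n τ := by
  obtain ⟨r, hr, hne⟩ : ∃ r ∈ Efin q n, qevAt q n r τ ≠ qevAt q n r ϑ := by
    by_contra! h
    exact hτ (eq_of_forall_qevAt_eq hn h)
  have hrT : r ∉ T := fun h => hne (hτT r h)
  rw [hϑ0 r hr hrT] at hne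
  calc 4 * T.card = ∑ p ∈ T, quatWeight (qevAt q n p τ) := by
        rw [Finset.sum_congr rfl fun p hp => (congrArg quatWeight (hτT p hp)).trans (hϑT p hp),
          Finset.sum_const, smul_eq_mul, mul_comm]
    _ < ∑ p ∈ Efin q n, quatWeight (qevAt q n p τ) :=
        Finset.sum_lt_sum_of_subset hT hr hrT (quatWeight_pos_iff.2 hne) fun _ _ _ => Nat.zero_le _
    _ = hw q n τ := (hw_eq_sum_quatWeight τ).symm

theorem stmt4_general (q n : ℕ) [Fact q.Prime] (hn : n ∣ q - 1)
    (T : Finset (ZMod q × ZMod q)) (hT : T ⊆ Efin q n)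
    (c : ZMod q × ZMod q → ZMod q) (hc : ∀ p ∈ T, c p ≠ 0)
    (σ : Rq q n) (hσ : σ = ∑ p ∈ T, c p • lag q n p.1 p.2)
    (W : ℍ[ZMod q,1,1]) (hW : W.re ≠ 0 ∧ W.imI ≠ 0 ∧ W.imJ ≠ 0 ∧ W.imK ≠ 0)
    (ϑ : ℍ[Rq q n,1,1]) (hϑ : ϑ = constQ q n W * cen q n σ)
    (A B G τ : ℍ[Rq q n,1,1]) (hG : ∀ p ∈ T, qevAt q n p G = 0)
    (hAB : A * G + ϑ = B * G + τ) (hτ : τ ≠ ϑ) :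
    4 * T.card < hw q n τ := by
  have hn0 : (n : ZMod q) ≠ 0 := zmod_natCast_ne_zero_of_dvd_sub_one hn
  have hϑE {p} (hp : p ∈ Efin q n) : qevAt q n p ϑ = (if p ∈ T then c p else 0) • W := by
    rw [hϑ, qevAt_constQ_mul_cen hp, hσ, evAt_sum_smul_lag hn0 hT c hp]
  refine four_mul_card_lt_hw_of_qevAt_eq hn hT (fun p hp => ?full) (fun p hp hpT => ?zero)
    (fun p hp => ?agree) hτ
  case full =>
    rw [hϑE (hT hp), if_pos hp, quatWeight_eq_four_iff]
    simpa [hc p hp] using hW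
  case zero => rw [hϑE hp, if_neg hpT, zero_smul]
  case agree =>
    rw [← qevAt_mul_add_of_eq_zero (hG p hp) B, ← hAB, qevAt_mul_add_of_eq_zero (hG p hp)]

/-- With the BQTRU setup (`σ = Σ_{(a,b)∈T} q_{a,b}·λ_{a,b}` with nonzero
coefficients, `W` a constant quaternion with all four components nonzero, `ϑ = W∘σ`,
`F∘F⁻¹ = F⁻¹∘F = 1 + α∘σ`, `G` vanishing on `T`, and `H̃ = F⁻¹∘G + ϑ`): if `τ' ≠ ϑ` and
there exist `F', α'` with `F∘F' = F'∘F = 1 + α'∘τ'` and `H̃ = F'∘G + τ'`, then the Hamming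
weight `‖ρ(τ')‖_H` is strictly greater than `4·|T|`. -/
theorem stmt4 (q n : ℕ) [Fact q.Prime] (hn : n ∣ q - 1) (hnpos : 0 < n)
    (T : Finset (ZMod q × ZMod q)) (hT : T ⊆ Efin q n)
    (c : ZMod q × ZMod q → ZMod q) (hc : ∀ p ∈ T, c p ≠ 0)
    (σ : Rq q n) (hσ : σ = ∑ p ∈ T, c p • lag q n p.1 p.2)
    (W : ℍ[ZMod q, 1, 1])
    (hW : W.re ≠ 0 ∧ W.imI ≠ 0 ∧ W.imJ ≠ 0 ∧ W.imK ≠ 0)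
    (ϑ : ℍ[Rq q n, 1, 1]) (hϑ : ϑ = constQ q n W * cen q n σ)
    (F Finv α G : ℍ[Rq q n, 1, 1])
    (hFinv1 : F * Finv = 1 + α * cen q n σ)
    (hFinv2 : Finv * F = 1 + α * cen q n σ)
    (hG : ∀ p ∈ T, qevAt q n p G = 0)
    (H : ℍ[Rq q n, 1, 1]) (hH : H = Finv * G + ϑ)
    (τ' : ℍ[Rq q n, 1, 1]) (hτ' : τ' ≠ ϑ)
    (F' α' : ℍ[Rq q n, 1, 1])
    (h1 : F * F' = 1 + α' * τ') (h2 : F' * F = 1 + α' * τ')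
    (h3 : H = F' * G + τ') :
    4 * T.card < hw q n τ' :=
  stmt4_general q n hn T hT c hc σ hσ W hW ϑ hϑ Finv F' G τ' hG (hH.symm.trans h3) hτ'
end
end

section
/- Decryption correctness of BQTRU: let σ ∈ R'_q be regarded as a central element of 𝔸_q, let p ∈ ℤ/qℤ be a scalar, and let F, F⁻¹, α, G, W, Φ, M ∈ 𝔸_q satisfy F∘F⁻¹ = F⁻¹∘F = 1 + α∘σ. Set H̃ = F⁻¹∘G + W∘σ and C = p·(H̃∘Φ) + M. Then F∘C = p·(G∘Φ) + F∘M + (p·(α∘G∘Φ) + p·(F∘W∘Φ))∘σ; in particular F∘C − p·(G∘Φ) − F∘M lies in the two-sided ideal of 𝔸_q generated by σ. -/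
noncomputable section

open MvPolynomial Quaternion

/-!
Modulo `σ` the element `F⁻¹` is a right inverse of `F`, so `F∘H̃ ≡ G` and hence
`F∘C ≡ p·(G∘Φ) + F∘M`. Keeping the multiples of `σ` and moving `σ` to the right past `G` and `Φ`
turns these congruences into the exact formula.
-/

section QuaternionAlgebra

variable {S R : Type*} [CommRing R] [DistribSMul S R] [IsScalarTower S R R] {c₁ c₂ c₃ : R}

/- Mathlib derives these instances from `Algebra S R`, but instance search does not recognise the
action of `ZMod q` on `Rq q n` as coming from an algebra structure. -/
instance : IsScalarTower S ℍ[R,c₁,c₂,c₃] ℍ[R,c₁,c₂,c₃] where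
  smul_assoc s a b := by
    ext <;> simp [smul_add, smul_sub, smul_mul_assoc, mul_smul_comm]

instance : SMulCommClass S ℍ[R,c₁,c₂,c₃] ℍ[R,c₁,c₂,c₃] where
  smul_comm s a b := by
    ext <;> simp [smul_add, smul_sub, mul_smul_comm]

end QuaternionAlgebra

theorem mul_add_mul_of_mul_eq_one_add_mul {A : Type*} [Semiring A] {σ F Finv α G : A}
    (hF : F * Finv = 1 + α * σ) (hG : Commute σ G) (W : A) :
    F * (Finv * G + W * σ) = G + (α * G + F * W) * σ :=
  calc F * (Finv * G + W * σ)
      = F * Finv * G + F * W * σ := by rw [mul_add, ← mul_assoc, ← mul_assoc]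
    _ = G + α * (σ * G) + F * W * σ := by rw [hF, add_mul, one_mul, mul_assoc α]
    _ = G + (α * G + F * W) * σ := by rw [hG.eq, ← mul_assoc α, add_mul, add_assoc]

theorem mul_smul_mul_add_of_mul_eq_add_mul {R A : Type*} [NonUnitalSemiring A] [DistribSMul R A]
    [IsScalarTower R A A] [SMulCommClass R A A] {σ F G H B Φ : A}
    (hH : F * H = G + B * σ) (hΦ : Commute σ Φ) (p : R) (M : A) :
    F * (p • (H * Φ) + M) = p • (G * Φ) + F * M + p • (B * Φ) * σ :=
  calc F * (p • (H * Φ) + M)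
      = p • (F * H * Φ) + F * M := by rw [mul_add, mul_smul_comm, mul_assoc]
    _ = p • (G * Φ + B * (σ * Φ)) + F * M := by rw [hH, add_mul, mul_assoc B]
    _ = p • (G * Φ) + p • (B * Φ) * σ + F * M := by
      rw [hΦ.eq, ← mul_assoc B, smul_add, smul_mul_assoc]
    _ = p • (G * Φ) + F * M + p • (B * Φ) * σ := add_right_comm _ _ _

theorem stmt7_general {R A : Type*} [Ring A] [DistribSMul R A] [IsScalarTower R A A]
    [SMulCommClass R A A] {σ F Finv α G W Φ M H C : A} {p : R}
    (hF : F * Finv = 1 + α * σ) (hG : Commute σ G) (hΦ : Commute σ Φ)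
    (hH : H = Finv * G + W * σ) (hC : C = p • (H * Φ) + M) :
    F * C = p • (G * Φ) + F * M + (p • (α * G * Φ) + p • (F * W * Φ)) * σ ∧
    F * C - p • (G * Φ) - F * M ∈ TwoSidedIdeal.span {σ} := by
  have hFH : F * H = G + (α * G + F * W) * σ :=
    hH ▸ mul_add_mul_of_mul_eq_one_add_mul hF hG W
  have hFC : F * C = p • (G * Φ) + F * M + (p • (α * G * Φ) + p • (F * W * Φ)) * σ := by
    rw [hC, mul_smul_mul_add_of_mul_eq_add_mul hFH hΦ, add_mul (α * G), smul_add]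
  refine ⟨hFC, ?_⟩
  rw [sub_sub, hFC, add_sub_cancel_left]
  exact TwoSidedIdeal.mul_mem_left _ _ _ (TwoSidedIdeal.subset_span rfl)

/-- Decryption correctness of BQTRU: if `F∘F⁻¹ = F⁻¹∘F = 1 + α∘σ`,
`H̃ = F⁻¹∘G + W∘σ` and `C = p·(H̃∘Φ) + M`, then
`F∘C = p·(G∘Φ) + F∘M + (p·(α∘G∘Φ) + p·(F∘W∘Φ))∘σ`; in particular `F∘C − p·(G∘Φ) − F∘M`
lies in the two-sided ideal of `𝔸_q` generated by `σ`. -/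
theorem stmt7 (q n : ℕ) [Fact q.Prime] (hn : n ∣ q - 1) (hnpos : 0 < n)
    (σ : Rq q n) (p : ZMod q)
    (F Finv α G W Φ M : ℍ[Rq q n, 1, 1])
    (h1 : F * Finv = 1 + α * cen q n σ)
    (h2 : Finv * F = 1 + α * cen q n σ)
    (H C : ℍ[Rq q n, 1, 1])
    (hH : H = Finv * G + W * cen q n σ)
    (hC : C = p • (H * Φ) + M) :
    F * C = p • (G * Φ) + F * M + (p • (α * G * Φ) + p • (F * W * Φ)) * cen q n σ ∧
    F * C - p • (G * Φ) - F * M ∈ TwoSidedIdeal.span {cen q n σ} :=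
  stmt7_general h1 (Algebra.commute_algebraMap_left σ G) (Algebra.commute_algebraMap_left σ Φ) hH hC
end
end

section
/- Delta property of the Lagrange interpolants: for all (a,b), (a',b') ∈ E, the evaluation ev_{a',b'}(λ_{a,b}) equals 1 if (a',b') = (a,b), and equals 0 otherwise. -/
noncomputable section

open MvPolynomial Quaternion

theorem geom_sum_of_pow_eq_one {R : Type*} [Ring R] [NoZeroDivisors R] [DecidableEq R] {z : R}
    {n : ℕ} (hz : z ^ n = 1) : ∑ i ∈ Finset.range n, z ^ i = if z = 1 then (n : R) else 0 := by
  split_ifs with h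
  · simp [h]
  · have hmul : (∑ i ∈ Finset.range n, z ^ i) * (z - 1) = 0 := by rw [geom_sum_mul, hz, sub_self]
    exact (mul_eq_zero.mp hmul).resolve_right (sub_ne_zero.mpr h)

theorem inv_natCast_mul_geom_sum_of_pow_eq_one {K : Type*} [Field K] [DecidableEq K] {n : ℕ}
    {c c' : K} (hn : (n : K) ≠ 0) (hc : c ^ n = 1) (hc' : c' ^ n = 1) :
    (n : K)⁻¹ * ∑ i ∈ Finset.range n, (c⁻¹ * c') ^ i = if c' = c then 1 else 0 := by
  have hc0 : c ≠ 0 := (IsUnit.of_pow_eq_one hc (by rintro rfl; simp at hn)).ne_zero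
  have hroot : (c⁻¹ * c') ^ n = 1 := by rw [mul_pow, inv_pow, hc, hc', inv_one, one_mul]
  simp only [geom_sum_of_pow_eq_one hroot, inv_mul_eq_one₀ hc0, eq_comm (a := c), mul_ite, mul_zero,
    inv_mul_cancel₀ hn]

theorem isUnit_natCast_zmod_of_dvd_sub_one {q n : ℕ} (hq : 0 < q) (hn : n ∣ q - 1) :
    IsUnit (n : ZMod q) := by
  have hcop : (q - 1).Coprime q := by simp [Nat.coprime_self_sub_left (show 1 ≤ q from hq)]
  exact (ZMod.isUnit_iff_coprime n q).mpr (hcop.coprime_dvd_left hn)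

theorem ev_lag (q n : ℕ) (a b a' b' : ZMod q) (ha' : a' ^ n = 1) (hb' : b' ^ n = 1) :
    ev q n a' b' ha' hb' (lag q n a b) = ((n : ZMod q) ^ 2)⁻¹ *
      ((∑ i ∈ Finset.range n, (a⁻¹ * a') ^ i) * ∑ j ∈ Finset.range n, (b⁻¹ * b') ^ j) := by
  simp only [ev, lag, Ideal.Quotient.lift_mk, map_mul, map_sum, map_pow, eval_C, eval_X,
    Matrix.cons_val_zero, Matrix.cons_val_one, Finset.sum_mul_sum, mul_pow,
    mul_mul_mul_comm _ _ (a' ^ _)]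

theorem stmt9_general (q n : ℕ) [Fact q.Prime] (hn : (n : ZMod q) ≠ 0)
    (a b a' b' : ZMod q) (ha : a ^ n = 1) (hb : b ^ n = 1)
    (ha' : a' ^ n = 1) (hb' : b' ^ n = 1) :
    ev q n a' b' ha' hb' (lag q n a b) = if (a', b') = (a, b) then 1 else 0 := by
  rw [ev_lag, sq, mul_inv, mul_mul_mul_comm,
    inv_natCast_mul_geom_sum_of_pow_eq_one hn ha ha',
    inv_natCast_mul_geom_sum_of_pow_eq_one hn hb hb', ite_zero_mul_ite_zero, mul_one]
  simp only [Prod.mk.injEq]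

/-- Delta property of the Lagrange interpolants: for `(a,b), (a',b') ∈ E`,
the evaluation `ev_{a',b'}(λ_{a,b})` equals `1` if `(a',b') = (a,b)` and `0` otherwise. -/
theorem stmt9 (q n : ℕ) [Fact q.Prime] (hn : n ∣ q - 1) (hnpos : 0 < n)
    (a b a' b' : ZMod q) (ha : a ^ n = 1) (hb : b ^ n = 1)
    (ha' : a' ^ n = 1) (hb' : b' ^ n = 1) :
    ev q n a' b' ha' hb' (lag q n a b) = if (a', b') = (a, b) then 1 else 0 :=
  stmt9_general q n (isUnit_natCast_zmod_of_dvd_sub_one (Fact.out : q.Prime).pos hn).ne_zero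
    a b a' b' ha hb ha' hb'
end
end

section
/- For every real number n ≥ 9, the following inequality holds: 16n²/7 + 4n·(log₂(3.4n² + 1) + 1) ≤ ((2·log₂(3.4n² + 1) + 6) · n² · (3.4n² + 1)^{2/log₂(27.4n² + 8)}) / (π·e). -/
open Real

/-!
Put `x = 3.4n² + 1`, `y = 27.4n² + 8` and `L = log₂ x`. Since `y ≤ 9x ≤ x^(3/2)`, we have
`log₂ y ≤ (3/2) L`, so the factor `x^(2 / log₂ y) = 2^(2L / log₂ y)` is at least `2^(4/3) ≥ 5/2`.
As `πe ≤ 8.55`, it is enough that `8.55 (16/7 + (4/n)(L + 1)) ≤ (5/2)(2L + 6)`. For `n ≥ 9` we may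
replace `4/n` by `4/9`, and the resulting linear inequality in `L` holds from `L = 7` on.
-/

theorem rpow_div_le_rpow_div_logb {b x y s t : ℝ} (hb : 1 < b) (hx : 0 < x) (hy : 1 < y)
    (hs : 0 ≤ s) (ht : 0 < t) (hyx : y ≤ x ^ t) : b ^ (s / t) ≤ x ^ (s / logb b y) := by
  have hb₀ : 0 < b := one_pos.trans hb
  have hlog_pos : 0 < logb b y := logb_pos hb hy
  have hlog : logb b y ≤ t * logb b x := by
    rw [← logb_rpow_eq_mul_logb_of_pos hx]
    exact logb_le_logb_of_le hb (one_pos.trans hy) hyx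
  have hexp : s / t ≤ logb b x * (s / logb b y) := by
    rw [mul_div_assoc', div_le_div_iff₀ ht hlog_pos]
    calc s * logb b y ≤ s * (t * logb b x) := by gcongr
      _ = logb b x * s * t := by ring
  calc b ^ (s / t) ≤ b ^ (logb b x * (s / logb b y)) :=
        rpow_le_rpow_of_exponent_le hb.le hexp
    _ = x ^ (s / logb b y) := by rw [rpow_mul hb₀.le, rpow_logb hb₀ hb.ne' hx]

theorem mul_le_rpow_three_halves {c x : ℝ} (hcx : c ^ 2 ≤ x) : c * x ≤ x ^ (3 / 2 : ℝ) := by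
  have hx : 0 ≤ x := (sq_nonneg c).trans hcx
  calc c * x ≤ √x * x := by gcongr; exact le_sqrt_of_sq_le hcx
    _ = x ^ (1 / 2 + 1 : ℝ) := by rw [sqrt_eq_rpow, rpow_add_one' hx (by norm_num)]
    _ = x ^ (3 / 2 : ℝ) := by norm_num

theorem five_halves_le_two_rpow_four_thirds : (5 / 2 : ℝ) ≤ 2 ^ (4 / 3 : ℝ) := by
  refine le_of_pow_le_pow_left₀ three_ne_zero (by positivity) ?_
  rw [← rpow_mul_natCast two_pos.le]
  norm_num

theorem five_halves_le_rpow_two_div_logb {c x y : ℝ} (hx : 0 < x) (hcx : c ^ 2 ≤ x) (hy : 1 < y)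
    (hyx : y ≤ c * x) : 5 / 2 ≤ x ^ (2 / logb 2 y) :=
  calc (5 / 2 : ℝ) ≤ 2 ^ (4 / 3 : ℝ) := five_halves_le_two_rpow_four_thirds
    _ = 2 ^ (2 / (3 / 2) : ℝ) := by norm_num
    _ ≤ x ^ (2 / logb 2 y) :=
        rpow_div_le_rpow_div_logb one_lt_two hx hy zero_le_two (by norm_num)
          (hyx.trans (mul_le_rpow_three_halves hcx))

theorem pi_mul_exp_one_le : π * exp 1 ≤ 8.55 :=
  calc π * exp 1 ≤ 3.1416 * 2.7182818286 := by
        gcongr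
        exacts [pi_lt_d4.le, exp_one_lt_d9.le]
    _ ≤ 8.55 := by norm_num

theorem quadratic_add_linear_mul_le {n L : ℝ} (hn : 9 ≤ n) (hL : 7 ≤ L) :
    (16 * n ^ 2 / 7 + 4 * n * (L + 1)) * 8.55 ≤ (2 * L + 6) * n ^ 2 * (5 / 2) := by
  have hn_sq : n ≤ n ^ 2 / 9 := by nlinarith
  have hcoeff : (16 / 7 + 4 / 9 * (L + 1)) * 8.55 ≤ (2 * L + 6) * (5 / 2) := by linarith
  calc (16 * n ^ 2 / 7 + 4 * n * (L + 1)) * 8.55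
      ≤ (16 * n ^ 2 / 7 + 4 * (n ^ 2 / 9) * (L + 1)) * 8.55 := by gcongr
    _ = (16 / 7 + 4 / 9 * (L + 1)) * 8.55 * n ^ 2 := by ring
    _ ≤ (2 * L + 6) * (5 / 2) * n ^ 2 := by gcongr
    _ = (2 * L + 6) * n ^ 2 * (5 / 2) := by ring

/-- For every real `n ≥ 9`,
`16n²/7 + 4n(log₂(3.4n²+1) + 1) ≤ ((2log₂(3.4n²+1) + 6)·n²·(3.4n²+1)^(2/log₂(27.4n²+8)))/(πe)`. -/
theorem stmt14 (n : ℝ) (hn : 9 ≤ n) :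
    16 * n ^ 2 / 7 + 4 * n * (Real.logb 2 (3.4 * n ^ 2 + 1) + 1) ≤
      ((2 * Real.logb 2 (3.4 * n ^ 2 + 1) + 6) * n ^ 2 *
        (3.4 * n ^ 2 + 1) ^ (2 / Real.logb 2 (27.4 * n ^ 2 + 8))) /
      (Real.pi * Real.exp 1) := by
  set x : ℝ := 3.4 * n ^ 2 + 1 with hx_def
  set y : ℝ := 27.4 * n ^ 2 + 8 with hy_def
  have hx : 2 ^ 7 ≤ x := by nlinarith
  have hx₀ : 0 < x := by positivity
  have hL : 7 ≤ logb 2 x := by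
    rw [le_logb_iff_rpow_le one_lt_two hx₀]
    exact_mod_cast hx
  have hpow : 5 / 2 ≤ x ^ (2 / logb 2 y) :=
    five_halves_le_rpow_two_div_logb (c := 9) hx₀ (by linarith) (by nlinarith) (by nlinarith)
  rw [le_div_iff₀ (by positivity)]
  calc (16 * n ^ 2 / 7 + 4 * n * (logb 2 x + 1)) * (π * exp 1)
      ≤ (16 * n ^ 2 / 7 + 4 * n * (logb 2 x + 1)) * 8.55 := by
        gcongr
        exact pi_mul_exp_one_le
    _ ≤ (2 * logb 2 x + 6) * n ^ 2 * (5 / 2) := quadratic_add_linear_mul_le hn hL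
    _ ≤ (2 * logb 2 x + 6) * n ^ 2 * x ^ (2 / logb 2 y) := by gcongr
end

section
/- Gordon–Motzkin theorem: let D be a division ring and P ∈ D[X] a nonzero polynomial of degree m. Call d ∈ D a (right) root of P if there exists Q ∈ D[X] with P = Q·(X − d). Then there exist elements d₁, …, d_m ∈ D such that every right root d of P is conjugate to some d_t, i.e., d = u·d_t·u⁻¹ for some nonzero u ∈ D. In particular, the right roots of P lie in at most m conjugacy classes of D. -/
/-!
A right root of `P` is a zero of the evaluation that places the argument to the right of the
coefficients. This evaluation is not multiplicative, but `(p * q)(a) = p(b) * q(a)` whenever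
`q(a) * a = b * q(a)`. Over a division ring, if `q(a) ≠ 0` we may take `b` to be the conjugate
`q(a) * a * q(a)⁻¹`, so every root of `p * q` is a root of `q` or conjugate to a root of `p`.
Splitting off linear right factors one at a time, each lowers the degree by one and contributes
at most one conjugacy class.
-/

section Evaluation

open Polynomial

theorem eval_mul_of_semiconjBy {R : Type*} [Semiring R] (p : R[X]) {q : R[X]} {a b : R}
    (h : SemiconjBy (q.eval a) a b) : (p * q).eval a = p.eval b * q.eval a := by
  induction p using Polynomial.induction_on' with
  | add p₁ p₂ h₁ h₂ => rw [add_mul, eval_add, h₁, h₂, eval_add, add_mul]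
  | monomial n c =>
    calc (monomial n c * q).eval a = c * (q.eval a * a ^ n) := by
          rw [← C_mul_X_pow_eq_monomial, mul_assoc, X_pow_mul, eval_C_mul, eval_mul_X_pow]
      _ = c * (b ^ n * q.eval a) := by rw [(h.pow_right n).eq]
      _ = (monomial n c).eval b * q.eval a := by rw [eval_monomial, mul_assoc]

theorem sub_C_eval_mem_span_X_sub_C {R : Type*} [Ring R] (p : R[X]) (a : R) :
    p - C (p.eval a) ∈ Ideal.span {X - C a} := by
  induction p using Polynomial.induction_on' with
  | add p q hp hq =>
    rw [eval_add, C_add, add_sub_add_comm]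
    exact add_mem hp hq
  | monomial n c =>
    have hpow : X ^ n - C a ^ n ∈ Ideal.span {X - C a} :=
      Ideal.mem_span_singleton'.mpr ⟨_, (commute_X (C a)).geom_sum₂_mul n⟩
    rw [eval_monomial, ← C_mul_X_pow_eq_monomial, C_mul, C_pow, ← mul_sub]
    exact Ideal.mul_mem_left _ (C c) hpow

theorem exists_eq_mul_X_sub_C_iff_isRoot {R : Type*} [Ring R] {p : R[X]} {a : R} :
    (∃ q : R[X], p = q * (X - C a)) ↔ p.IsRoot a := by
  constructor
  · rintro ⟨q, rfl⟩
    exact eval_mul_X_sub_C a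
  · intro h
    have hmem := sub_C_eval_mem_span_X_sub_C p a
    rw [h.eq_zero, C_0, sub_zero, Ideal.mem_span_singleton'] at hmem
    exact hmem.imp fun _ => Eq.symm

end Evaluation

section RootConjClasses

open Polynomial

/-- The conjugacy classes that contain a root of `p`. Roots are zeros of `Polynomial.eval`, which
multiplies coefficients on the left; over a ring these are the right roots, those `a` for which
`X - C a` is a right factor of `p`. -/
def rootConjClasses {R : Type*} [Semiring R] (p : R[X]) : Set (ConjClasses R) :=
  ConjClasses.mk '' {a | p.IsRoot a}

theorem rootConjClasses_X_sub_C {R : Type*} [Ring R] (a : R) :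
    rootConjClasses (X - C a) = {ConjClasses.mk a} := by
  simp only [rootConjClasses, root_X_sub_C, Set.ofPred_eq_eq_singleton', Set.image_singleton]

theorem rootConjClasses_mul_subset {D : Type*} [DivisionSemiring D] (p q : D[X]) :
    rootConjClasses (p * q) ⊆ rootConjClasses p ∪ rootConjClasses q := by
  rintro _ ⟨a, ha, rfl⟩
  by_cases hqa : q.eval a = 0
  · exact .inr ⟨a, hqa, rfl⟩
  · set b := q.eval a * a * (q.eval a)⁻¹
    have hsemi : SemiconjBy (q.eval a) a b := (inv_mul_cancel_right₀ hqa _).symm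
    have hpb : p.eval b * q.eval a = 0 := (eval_mul_of_semiconjBy p hsemi).symm.trans ha
    have hconj : IsConj a b := ⟨Units.mk0 _ hqa, hsemi⟩
    exact .inl ⟨b, (mul_eq_zero_iff_right hqa).mp hpb,
      ConjClasses.mk_eq_mk_iff_isConj.mpr hconj.symm⟩

theorem encard_rootConjClasses_le {D : Type*} [DivisionRing D] {p : D[X]} (hp : p ≠ 0) :
    (rootConjClasses p).encard ≤ p.natDegree := by
  induction hn : p.natDegree using Nat.strong_induction_on generalizing p with
  | _ n ih =>
    obtain hempty | ⟨_, a, ha, rfl⟩ := (rootConjClasses p).eq_empty_or_nonempty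
    · simp only [hempty, Set.encard_empty, zero_le]
    obtain ⟨q, rfl⟩ := exists_eq_mul_X_sub_C_iff_isRoot.mpr ha
    have hq : q ≠ 0 := left_ne_zero_of_mul hp
    have hdeg : n = q.natDegree + 1 := by
      rw [← hn, natDegree_mul hq (X_sub_C_ne_zero a), natDegree_X_sub_C]
    calc (rootConjClasses (q * (X - C a))).encard
        ≤ (rootConjClasses q ∪ rootConjClasses (X - C a)).encard :=
          Set.encard_le_encard (rootConjClasses_mul_subset q (X - C a))
      _ ≤ (rootConjClasses q).encard + (rootConjClasses (X - C a)).encard :=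
          Set.encard_union_le _ _
      _ ≤ q.natDegree + 1 := by
          rw [rootConjClasses_X_sub_C, Set.encard_singleton]
          gcongr
          exact ih q.natDegree (by lia) hq rfl
      _ = n := by rw [hdeg, Nat.cast_add, Nat.cast_one]

end RootConjClasses

theorem exists_fin_subset_range_of_encard_le {α : Type*} [Nonempty α] {s : Set α} {m : ℕ}
    (h : s.encard ≤ m) : ∃ f : Fin m → α, s ⊆ Set.range f := by
  obtain ⟨hfin, hcard⟩ := Set.encard_le_coe_iff_finite_ncard_le.mp h
  have := hfin.fintype
  obtain ⟨e⟩ : Nonempty (s ↪ Fin m) := Function.Embedding.nonempty_of_card_le <| by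
    rwa [Fintype.card_fin, ← Nat.card_eq_fintype_card]
  exact ⟨Function.extend e (↑) fun _ => Classical.arbitrary α,
    fun x hx => ⟨e ⟨x, hx⟩, e.injective.extend_apply _ _ _⟩⟩

/-- Gordon–Motzkin theorem: let `D` be a division ring and `P ∈ D[X]` a
nonzero polynomial of degree `m`. Then there exist `d₁, …, d_m ∈ D` such that every right root
`d` of `P` (i.e. `P = Q·(X − d)` for some `Q`) is conjugate to some `d_t`. In particular the
right roots of `P` lie in at most `m` conjugacy classes of `D`. -/
theorem stmt19 (D : Type*) [DivisionRing D] (m : ℕ) (P : Polynomial D)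
    (hP : P ≠ 0) (hdeg : P.natDegree = m) :
    ∃ ds : Fin m → D, ∀ d : D,
      (∃ Q : Polynomial D, P = Q * (Polynomial.X - Polynomial.C d)) →
      ∃ t : Fin m, ∃ u : D, u ≠ 0 ∧ d = u * ds t * u⁻¹ := by
  subst hdeg
  obtain ⟨classes, hclasses⟩ := exists_fin_subset_range_of_encard_le (encard_rootConjClasses_le hP)
  choose ds hds using fun t => ConjClasses.exists_rep (classes t)
  refine ⟨ds, fun d hd => ?_⟩
  obtain ⟨t, ht⟩ := hclasses ⟨d, exists_eq_mul_X_sub_C_iff_isRoot.mp hd, rfl⟩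
  have hconj : IsConj (ds t) d := ConjClasses.mk_eq_mk_iff_isConj.mp ((hds t).trans ht)
  obtain ⟨u, hu, rfl⟩ := GroupWithZero.isConj_iff₀.mp hconj
  exact ⟨t, u, hu, rfl⟩
end
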